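/- arXiv:1901.10790 — 2 statements merged into one kernel-verified Lean document; each statement's English description precedes it below -/
import Mathlib

section
/- Let 0 < λ ≤ 1 and 0 < α ≤ 1. There exists a function F : ℂ → ℂ that is complex differentiable on ℂ \ {1} and satisfies F(s) = ∑_{m=0}^∞ e^{2πiλm}/(m+α)^s for all s with Re s > 1; moreover any two such functions agree on ℂ \ {1}, and if 0 < λ < 1 then F can be chosen complex differentiable on all of ℂ. -/
/-- The Dirichlet series of the Lerch zeta-function, convergent for `1 < re s`. -/
noncomputable def lerchSeries (lam alp : ℝ) (s : ℂ) : ℂ :=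
  ∑' m : ℕ, Complex.exp (2 * Real.pi * Complex.I * lam * m) / ((m : ℂ) + alp) ^ s

/-- `F` is the analytic continuation of the Lerch zeta-function with parameters `lam`, `alp`:
it is complex differentiable away from `1` and agrees with the Dirichlet series on `1 < re s`. -/
def IsLerch (lam alp : ℝ) (F : ℂ → ℂ) : Prop :=
  (∀ s : ℂ, s ≠ 1 → DifferentiableAt ℂ F s) ∧
  ∀ s : ℂ, 1 < s.re → F s = lerchSeries lam alp s

open scoped Classical

/-- The multiplicity (order of vanishing) of `F` at `z` (junk value `0` if `F` is not
analytic at `z` or vanishes to infinite order). -/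
noncomputable def zeroOrder (F : ℂ → ℂ) (z : ℂ) : ℕ :=
  if h : AnalyticAt ℂ F z then (analyticOrderAt F z).toNat else 0

/-- Iterated forward differences of `u ↦ u ^ (-s)`. -/
noncomputable def lerchD : ℕ → ℂ → ℝ → ℂ
  | 0, s, u => (u : ℂ) ^ (-s)
  | k + 1, s, u => lerchD k s (u + 1) - lerchD k s u

lemma lerchD_hasDerivAt (k : ℕ) : ∀ (s : ℂ) (u : ℝ), 0 < u →
    HasDerivAt (fun v : ℝ => lerchD k s v) (-s * lerchD k (s + 1) u) u := by
  induction k with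
  | zero =>
    intro s u hu
    by_cases hs : s = 0
    · subst hs
      simpa [lerchD] using hasDerivAt_const u (1 : ℂ)
    · have := hasDerivAt_ofReal_cpow_const (x := u) hu.ne' (r := -s) (neg_ne_zero.mpr hs)
      simp only [lerchD]
      rwa [show -(s + 1) = -s - 1 by ring]
  | succ k ih =>
    intro s u hu
    simp only [lerchD]
    have h1 := (ih s (u + 1) (by linarith)).comp_add_const u 1
    have h2 := h1.sub (ih s u hu)
    rw [mul_sub]
    exact h2

lemma lerchD_differentiable (k : ℕ) : ∀ (u : ℝ), 0 < u →
    Differentiable ℂ (fun s : ℂ => lerchD k s u) := by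
  induction k with
  | zero =>
    intro u hu s
    simp only [lerchD]
    exact (differentiableAt_id.neg).const_cpow (Or.inl (by exact_mod_cast hu.ne'))
  | succ k ih =>
    intro u hu
    simp only [lerchD]
    exact (ih (u + 1) (by linarith)).sub (ih u hu)

lemma lerchD_norm_le (k : ℕ) : ∀ (s : ℂ) (u : ℝ), 0 < u → 0 ≤ s.re + k →
    ‖lerchD k s u‖ ≤ (‖s‖ + k) ^ k * u ^ (-(s.re + k)) := by
  induction k with
  | zero =>
    intro s u hu _
    simp [lerchD, Complex.norm_cpow_eq_rpow_re_of_pos hu]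
  | succ k ih =>
    intro s u hu hs
    push_cast at hs ⊢
    have key : ∀ v ∈ Set.Ico u (u + 1), ‖-s * lerchD k (s + 1) v‖ ≤
        (‖s‖ + (k + 1)) ^ (k + 1) * u ^ (-(s.re + (k + 1))) := by
      intro v hv
      have hv0 : 0 < v := lt_of_lt_of_le hu hv.1
      have h1 := ih (s + 1) v hv0 (by simp; linarith)
      have h2 : v ^ (-((s + 1).re + k)) ≤ u ^ (-(s.re + (k + 1))) := by
        have : -((s + 1).re + (k : ℝ)) = -(s.re + (k + 1)) := by simp; ring
        rw [this]
        exact Real.rpow_le_rpow_of_nonpos hu hv.1 (by linarith)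
      have h3 : ‖s + 1‖ ≤ ‖s‖ + 1 := by simpa using norm_add_le s 1
      have h4 : (‖s + 1‖ + k) ^ k ≤ (‖s‖ + (k + 1)) ^ k := by
        apply pow_le_pow_left₀ (by positivity); linarith
      rw [norm_mul, norm_neg]
      calc ‖s‖ * ‖lerchD k (s + 1) v‖
          ≤ (‖s‖ + (k + 1)) * ((‖s‖ + (k + 1)) ^ k * u ^ (-(s.re + (k + 1)))) := by
            apply mul_le_mul _ _ (norm_nonneg _) (by positivity)
            · have : (0 : ℝ) ≤ k := Nat.cast_nonneg k
              linarith
            · exact h1.trans (mul_le_mul h4 h2 (by positivity) (by positivity))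
        _ = _ := by ring
    have := norm_image_sub_le_of_norm_deriv_le_segment' (f := fun v : ℝ => lerchD k s v)
      (f' := fun v => -s * lerchD k (s + 1) v) (a := u) (b := u + 1)
      (fun v hv => (lerchD_hasDerivAt k s v (lt_of_lt_of_le hu hv.1)).hasDerivWithinAt) key
      (u + 1) (by simp)
    simpa [lerchD] using this

lemma lerch_rpow_le {x p q P : ℝ} (hx : 0 < x) (h1 : p ≤ q) (h2 : q ≤ P) :
    x ^ (-q) ≤ x ^ (-p) + x ^ (-P) := by
  have := Real.rpow_nonneg hx.le (-p)
  have := Real.rpow_nonneg hx.le (-P)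
  rcases le_total 1 x with h | h
  · have := Real.rpow_le_rpow_of_exponent_le h (show -q ≤ -p by linarith)
    linarith
  · have := Real.rpow_le_rpow_of_exponent_ge hx h (show -P ≤ -q by linarith)
    linarith

lemma lerch_summable {a p : ℝ} (ha : 0 < a) (hp : 1 < p) :
    Summable (fun m : ℕ => ((m : ℝ) + a) ^ (-p)) := by
  refine ((Real.summable_one_div_nat_add_rpow a p).mpr hp).congr fun m => ?_
  have : 0 < (m : ℝ) + a := by positivity
  rw [abs_of_pos this, Real.rpow_neg this.le, one_div]

/-- The series with the `k`-th differences. -/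
noncomputable def lerchL (z : ℂ) (a : ℝ) (k : ℕ) (s : ℂ) : ℂ :=
  ∑' m : ℕ, z ^ m * lerchD k s ((m : ℝ) + a)

lemma lerchL_term_le {z : ℂ} (hz : ‖z‖ = 1) {a : ℝ} (ha : 0 < a) (k : ℕ) (s : ℂ)
    (hs : 0 ≤ s.re + k) (m : ℕ) :
    ‖z ^ m * lerchD k s ((m : ℝ) + a)‖ ≤ (‖s‖ + k) ^ k * ((m : ℝ) + a) ^ (-(s.re + k)) := by
  rw [norm_mul, norm_pow, hz, one_pow, one_mul]
  exact lerchD_norm_le k s _ (by positivity) hs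

lemma lerchL_summable {z : ℂ} (hz : ‖z‖ = 1) {a : ℝ} (ha : 0 < a) (k : ℕ) (s : ℂ)
    (hs : 1 < s.re + k) : Summable (fun m : ℕ => z ^ m * lerchD k s ((m : ℝ) + a)) :=
  Summable.of_norm_bounded ((lerch_summable ha hs).mul_left ((‖s‖ + k) ^ k))
    (lerchL_term_le hz ha k s (by linarith))

lemma lerchL_differentiableAt {z : ℂ} (hz : ‖z‖ = 1) {a : ℝ} (ha : 0 < a) (k : ℕ) (s₀ : ℂ)
    (hs : 1 < s₀.re + k) : DifferentiableAt ℂ (lerchL z a k) s₀ := by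
  set r := (s₀.re + k - 1) / 2 with hr
  have hr0 : 0 < r := by rw [hr]; linarith
  have hsum : Summable (fun m : ℕ => (‖s₀‖ + r + k) ^ k *
      (((m : ℝ) + a) ^ (-(1 + r)) + ((m : ℝ) + a) ^ (-(s₀.re + k + r)))) :=
    ((lerch_summable ha (by linarith)).add (lerch_summable ha (by linarith))).mul_left _
  have := Complex.differentiableOn_tsum_of_summable_norm (U := Metric.ball s₀ r)
    (F := fun (m : ℕ) (s : ℂ) => z ^ m * lerchD k s ((m : ℝ) + a)) hsum
    (fun m => ((lerchD_differentiable k _ (by positivity)).const_mul _).differentiableOn)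
    Metric.isOpen_ball (by
      intro m w hw
      rw [mem_ball_iff_norm] at hw
      have h1 : |(w - s₀).re| < r := (Complex.abs_re_le_norm _).trans_lt hw
      rw [Complex.sub_re, abs_lt] at h1
      have h2 : ‖w‖ ≤ ‖s₀‖ + r := by
        have := norm_add_le s₀ (w - s₀)
        rw [add_sub_cancel] at this
        linarith
      refine (lerchL_term_le hz ha k w (by linarith) m).trans ?_
      have hx : 0 < (m : ℝ) + a := by positivity
      apply mul_le_mul
      · exact pow_le_pow_left₀ (by positivity) (by linarith) _
      · exact lerch_rpow_le hx (by linarith) (by linarith)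
      · positivity
      · positivity)
  exact this.differentiableAt (Metric.ball_mem_nhds _ hr0)

lemma lerchL_rec {z : ℂ} (hz : ‖z‖ = 1) (hz1 : z ≠ 1) {a : ℝ} (ha : 0 < a) (k : ℕ) (s : ℂ)
    (hs : 1 < s.re + k) :
    lerchL z a k s = (1 - z)⁻¹ * (lerchD k s a + z * lerchL z a (k + 1) s) := by
  have h0 := lerchL_summable hz ha k s hs
  have h1 : lerchL z a k s = lerchD k s a +
      ∑' m : ℕ, z ^ (m + 1) * lerchD k s (((m + 1 : ℕ) : ℝ) + a) := by
    unfold lerchL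
    rw [h0.tsum_eq_zero_add]
    simp
  have h0' := (summable_nat_add_iff 1).mpr h0
  have h2 : z * lerchL z a (k + 1) s =
      (∑' m : ℕ, z ^ (m + 1) * lerchD k s (((m + 1 : ℕ) : ℝ) + a)) - z * lerchL z a k s := by
    unfold lerchL
    rw [← tsum_mul_left, ← tsum_mul_left, ← h0'.tsum_sub (h0.mul_left z)]
    refine tsum_congr fun m => ?_
    simp only [lerchD]
    rw [show ((m + 1 : ℕ) : ℝ) + a = (m : ℝ) + a + 1 by push_cast; ring]
    ring
  have h3 : 1 - z ≠ 0 := sub_ne_zero.mpr hz1.symm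
  rw [eq_inv_mul_iff_mul_eq₀ h3, h2]
  linear_combination h1

/-- Continuation by `n` half-plane steps. -/
noncomputable def lerchE (z : ℂ) (a : ℝ) : ℕ → ℕ → ℂ → ℂ
  | 0, k, s => lerchL z a k s
  | n + 1, k, s => (1 - z)⁻¹ * (lerchD k s a + z * lerchE z a n (k + 1) s)

lemma lerchE_differentiableAt {z : ℂ} (hz : ‖z‖ = 1) {a : ℝ} (ha : 0 < a) (n : ℕ) :
    ∀ (k : ℕ) (s : ℂ), 1 < s.re + k + n → DifferentiableAt ℂ (lerchE z a n k) s := by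
  induction n with
  | zero =>
    intro k s hs
    exact lerchL_differentiableAt hz ha k s (by simpa using hs)
  | succ n ih =>
    intro k s hs
    have := ih (k + 1) s (by push_cast at hs ⊢; linarith)
    exact (((lerchD_differentiable k a ha) s).add (this.const_mul z)).const_mul _

lemma lerchE_succ {z : ℂ} (hz : ‖z‖ = 1) (hz1 : z ≠ 1) {a : ℝ} (ha : 0 < a) (n : ℕ) :
    ∀ (k : ℕ) (s : ℂ), 1 < s.re + k + n → lerchE z a (n + 1) k s = lerchE z a n k s := by
  induction n with
  | zero =>
    intro k s hs
    exact (lerchL_rec hz hz1 ha k s (by simpa using hs)).symm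
  | succ n ih =>
    intro k s hs
    have := ih (k + 1) s (by push_cast at hs ⊢; linarith)
    rw [lerchE, this, lerchE]

lemma lerchE_eq {z : ℂ} (hz : ‖z‖ = 1) (hz1 : z ≠ 1) {a : ℝ} (ha : 0 < a) {n m : ℕ}
    (hnm : n ≤ m) (k : ℕ) (s : ℂ) (hs : 1 < s.re + k + n) :
    lerchE z a m k s = lerchE z a n k s := by
  induction m, hnm using Nat.le_induction with
  | base => rfl
  | succ m hm ih =>
    rw [lerchE_succ hz hz1 ha m k s, ih]
    have : (n : ℝ) ≤ m := by exact_mod_cast hm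
    linarith

lemma lerch_entire {z : ℂ} (hz : ‖z‖ = 1) (hz1 : z ≠ 1) {a : ℝ} (ha : 0 < a) :
    ∃ F : ℂ → ℂ, Differentiable ℂ F ∧ ∀ s : ℂ, 1 < s.re → F s = lerchL z a 0 s := by
  have hN : ∀ s : ℂ, 1 < s.re + ((0 : ℕ) : ℝ) + (⌈2 - s.re⌉₊ : ℝ) := by
    intro s
    have := Nat.le_ceil (2 - s.re)
    push_cast
    linarith
  have main : ∀ (n : ℕ) (s : ℂ), 1 < s.re + ((0 : ℕ) : ℝ) + n →
      lerchE z a ⌈2 - s.re⌉₊ 0 s = lerchE z a n 0 s := by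
    intro n s hs
    rcases le_total n ⌈2 - s.re⌉₊ with h | h
    · exact lerchE_eq hz hz1 ha h 0 s hs
    · exact (lerchE_eq hz hz1 ha h 0 s (hN s)).symm
  refine ⟨fun s => lerchE z a ⌈2 - s.re⌉₊ 0 s, fun s => ?_, fun s hs => ?_⟩
  · refine (lerchE_differentiableAt hz ha ⌈2 - s.re⌉₊ 0 s (hN s)).congr_of_eventuallyEq ?_
    have hopen : IsOpen {w : ℂ | 1 < w.re + ((0 : ℕ) : ℝ) + (⌈2 - s.re⌉₊ : ℝ)} :=
      isOpen_lt continuous_const (by fun_prop)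
    filter_upwards [hopen.mem_nhds (hN s)] with w hw
    exact main _ w hw
  · exact main 0 s (by simpa using hs)

lemma lerchSeries_eq_lerchL (lam alp : ℝ) (s : ℂ) :
    lerchSeries lam alp s = lerchL (Complex.exp (2 * Real.pi * Complex.I * lam)) alp 0 s := by
  unfold lerchSeries lerchL
  refine tsum_congr fun m => ?_
  simp only [lerchD]
  rw [← Complex.exp_nat_mul, Complex.cpow_neg, div_eq_mul_inv]
  push_cast
  rw [mul_comm (m : ℂ)]

/-- existence and uniqueness of the analytic continuation of the Lerch
zeta-function; for `0 < λ < 1` the continuation is entire. -/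
theorem lerch_exists_unique (lam alp : ℝ) (hlam0 : 0 < lam) (hlam1 : lam ≤ 1)
    (halp0 : 0 < alp) (halp1 : alp ≤ 1) :
    (∃ F : ℂ → ℂ, IsLerch lam alp F) ∧
      (∀ F G : ℂ → ℂ, IsLerch lam alp F → IsLerch lam alp G → ∀ s : ℂ, s ≠ 1 → F s = G s) ∧
      (lam < 1 → ∃ F : ℂ → ℂ, Differentiable ℂ F ∧ IsLerch lam alp F) := by
  have hent : lam < 1 → ∃ F : ℂ → ℂ, Differentiable ℂ F ∧ IsLerch lam alp F := by
    intro hl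
    have hz : ‖Complex.exp (2 * Real.pi * Complex.I * lam)‖ = 1 := by
      rw [Complex.norm_exp]; simp
    have hz1 : Complex.exp (2 * Real.pi * Complex.I * lam) ≠ 1 := by
      intro h
      obtain ⟨n, hn⟩ := Complex.exp_eq_one_iff.mp h
      have h2 : (2 * Real.pi * Complex.I : ℂ) ≠ 0 := Complex.two_pi_I_ne_zero
      have h3 : (lam : ℂ) = n := by
        apply mul_left_cancel₀ h2
        rw [hn]; ring
      have h4 : lam = n := by exact_mod_cast h3
      have h5 : (0 : ℤ) < n := by exact_mod_cast h4 ▸ hlam0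
      have h6 : n < (1 : ℤ) := by exact_mod_cast h4 ▸ hl
      omega
    obtain ⟨F, hF, hFs⟩ := lerch_entire hz hz1 halp0
    exact ⟨F, hF, fun s _ => hF s, fun s hs => by rw [hFs s hs, lerchSeries_eq_lerchL]⟩
  refine ⟨?_, ?_, hent⟩
  · rcases hlam1.lt_or_eq with h | h
    · obtain ⟨F, _, hF⟩ := hent h
      exact ⟨F, hF⟩
    · subst h
      refine ⟨HurwitzZeta.hurwitzZeta (alp : UnitAddCircle),
        fun s hs => HurwitzZeta.differentiableAt_hurwitzZeta _ hs, fun s hs => ?_⟩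
      rw [← (HurwitzZeta.hasSum_hurwitzZeta_of_one_lt_re ⟨halp0.le, halp1⟩ hs).tsum_eq]
      unfold lerchSeries
      refine tsum_congr fun m => ?_
      have : Complex.exp (2 * Real.pi * Complex.I * (1 : ℝ) * m) = 1 :=
        Complex.exp_eq_one_iff.mpr ⟨m, by push_cast; ring⟩
      rw [this]
  · intro F G hF hG s hs
    have hA : ∀ H : ℂ → ℂ, IsLerch lam alp H → AnalyticOnNhd ℂ H {(1 : ℂ)}ᶜ := by
      intro H hH
      exact DifferentiableOn.analyticOnNhd
        (fun w hw => (hH.1 w hw).differentiableWithinAt) isOpen_compl_singleton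
    have hconn : IsPreconnected ({(1 : ℂ)}ᶜ) :=
      (isConnected_compl_singleton_of_one_lt_rank (by simp) (1 : ℂ)).isPreconnected
    refine (hA F hF).eqOn_of_preconnected_of_eventuallyEq (hA G hG) hconn
      (z₀ := 2) (by simp) ?_ (show s ∈ ({(1 : ℂ)}ᶜ : Set ℂ) from hs)
    have hopen : IsOpen {w : ℂ | 1 < w.re} := isOpen_lt continuous_const Complex.continuous_re
    filter_upwards [hopen.mem_nhds (show (2 : ℂ) ∈ {w : ℂ | 1 < w.re} by simp)] with w hw
    rw [hF.2 w hw, hG.2 w hw]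
end

section
/- A non-real complex number ρ is a zero of L(1/2, 1/2, ·) if and only if 1 − conj(ρ) is a zero of L(1/2, 1/2, ·), where conj denotes complex conjugation. -/
open scoped Classical

lemma aux_exp (m : ℕ) :
    Complex.exp (2 * Real.pi * Complex.I * ((1 / 2 : ℝ) : ℂ) * m) = (-1) ^ m := by
  rw [← Complex.exp_pi_mul_I, ← Complex.exp_nat_mul]
  congr 1
  push_cast
  ring

lemma aux_sin (m : ℕ) :
    Real.sin (2 * Real.pi * (1 / 4 : ℝ) * ((2 * m + 1 : ℕ) : ℝ)) = (-1) ^ m := by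
  have : 2 * Real.pi * (1 / 4 : ℝ) * ((2 * m + 1 : ℕ) : ℝ) = Real.pi / 2 + m * Real.pi := by
    push_cast
    ring
  rw [this, Real.sin_add_nat_mul_pi]
  simp

lemma aux_sin_even (m : ℕ) :
    Real.sin (2 * Real.pi * (1 / 4 : ℝ) * ((2 * m : ℕ) : ℝ)) = 0 := by
  have : 2 * Real.pi * (1 / 4 : ℝ) * ((2 * m : ℕ) : ℝ) = m * Real.pi := by
    push_cast
    ring
  rw [this, Real.sin_nat_mul_pi]

lemma aux_two_mul (x : ℝ) (hx : 0 ≤ x) (s : ℂ) :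
    ((2 : ℂ) * (x : ℂ)) ^ s = 2 ^ s * (x : ℂ) ^ s := by
  have := Complex.mul_cpow_ofReal_nonneg (a := 2) (b := x) (by norm_num) hx s
  simpa using this

lemma aux_two_ne (s : ℂ) : (2 : ℂ) ^ s ≠ 0 := by
  simp [Complex.cpow_eq_zero_iff]

lemma aux_hasSum_sin {s : ℂ} (hs : 1 < s.re) :
    HasSum (fun m : ℕ => Complex.exp (2 * Real.pi * Complex.I * ((1 / 2 : ℝ) : ℂ) * m) /
      ((m : ℂ) + ((1 / 2 : ℝ) : ℂ)) ^ s)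
      (2 ^ s * HurwitzZeta.sinZeta ((1 / 4 : ℝ) : UnitAddCircle) s) := by
  have h := HurwitzZeta.hasSum_nat_sinZeta (1 / 4) hs
  have hinj : Function.Injective (fun m : ℕ => 2 * m + 1) := by
    intro a b hab
    simp only at hab
    omega
  rw [← hinj.hasSum_iff] at h
  · refine (h.mul_left (2 ^ s)).congr_fun fun m => ?_
    simp only [Function.comp]
    rw [aux_exp, aux_sin]
    have e : (((2 * m + 1 : ℕ) : ℕ) : ℂ) = 2 * (((m : ℝ) + 1 / 2 : ℝ) : ℂ) := by
      push_cast
      ring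
    rw [e, aux_two_mul _ (by positivity)]
    have h2 := aux_two_ne s
    push_cast
    generalize ((m : ℂ) + 1 / 2) ^ s = w
    rw [← mul_div_assoc, mul_div_mul_left _ _ h2]
  · intro n hn
    rcases Nat.even_or_odd' n with ⟨k, rfl | rfl⟩
    · rw [aux_sin_even]
      simp
    · exact absurd ⟨k, rfl⟩ hn

lemma aux_series_sin {s : ℂ} (hs : 1 < s.re) :
    lerchSeries (1 / 2) (1 / 2) s =
      2 ^ s * HurwitzZeta.sinZeta ((1 / 4 : ℝ) : UnitAddCircle) s :=
  (aux_hasSum_sin hs).tsum_eq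

lemma aux_pair {f : ℕ → ℂ} (hf : Summable f) :
    ∑' m, f m = ∑' k, (f (2 * k) + f (2 * k + 1)) := by
  have he : Summable (fun k => f (2 * k)) :=
    hf.comp_injective (i := fun k : ℕ => 2 * k) (fun a b hab => by
      simp only at hab
      omega)
  have ho : Summable (fun k => f (2 * k + 1)) :=
    hf.comp_injective (i := fun k : ℕ => 2 * k + 1) (fun a b hab => by
      simp only at hab
      omega)
  rw [← tsum_even_add_odd he ho, he.tsum_add ho]

lemma aux_series_odd {s : ℂ} (hs : 1 < s.re) :
    lerchSeries (1 / 2) (1 / 2) s =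
      2 * (2 ^ s)⁻¹ * HurwitzZeta.hurwitzZetaOdd ((1 / 4 : ℝ) : UnitAddCircle) s := by
  have h := HurwitzZeta.hasSum_nat_hurwitzZetaOdd_of_mem_Icc (a := 1 / 4)
    ⟨by norm_num, by norm_num⟩ hs
  rw [lerchSeries, aux_pair (aux_hasSum_sin hs).summable, ← h.tsum_eq, ← tsum_mul_left]
  refine tsum_congr fun k => ?_
  rw [aux_exp, aux_exp]
  have e1 : ((2 * k : ℕ) : ℂ) + ((1 / 2 : ℝ) : ℂ) = 2 * (((k : ℝ) + 1 / 4 : ℝ) : ℂ) := by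
    push_cast
    ring
  have e2 : ((2 * k + 1 : ℕ) : ℂ) + ((1 / 2 : ℝ) : ℂ) = 2 * (((k : ℝ) + 3 / 4 : ℝ) : ℂ) := by
    push_cast
    ring
  have e3 : (k : ℂ) + 1 - ((1 / 4 : ℝ) : ℂ) = (((k : ℝ) + 3 / 4 : ℝ) : ℂ) := by
    push_cast
    ring
  have e4 : (k : ℂ) + ((1 / 4 : ℝ) : ℂ) = (((k : ℝ) + 1 / 4 : ℝ) : ℂ) := by
    push_cast
    ring
  rw [e1, e2, e3, e4, aux_two_mul _ (by positivity), aux_two_mul _ (by positivity),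
    pow_succ, pow_mul]
  generalize (2 : ℂ) ^ s = z
  generalize (((k : ℝ) + 1 / 4 : ℝ) : ℂ) ^ s = x
  generalize (((k : ℝ) + 3 / 4 : ℝ) : ℂ) ^ s = y
  rw [neg_one_sq, one_pow]
  simp only [div_eq_mul_inv, mul_inv]
  ring

lemma aux_unique {F G : ℂ → ℂ} (hF : ∀ s : ℂ, s ≠ 1 → DifferentiableAt ℂ F s)
    (hG : ∀ s : ℂ, s ≠ 1 → DifferentiableAt ℂ G s)
    (h : ∀ s : ℂ, 1 < s.re → F s = G s) (s : ℂ) (hs : s ≠ 1) : F s = G s := by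
  have hopen : IsOpen ({1}ᶜ : Set ℂ) := isOpen_compl_singleton
  have aF : AnalyticOnNhd ℂ F {1}ᶜ :=
    DifferentiableOn.analyticOnNhd (fun z hz => (hF z hz).differentiableWithinAt) hopen
  have aG : AnalyticOnNhd ℂ G {1}ᶜ :=
    DifferentiableOn.analyticOnNhd (fun z hz => (hG z hz).differentiableWithinAt) hopen
  refine aF.eqOn_of_preconnected_of_eventuallyEq aG
    (isConnected_compl_singleton_of_one_lt_rank (by simp) 1).isPreconnected
    (z₀ := 2) (by simp) ?_ hs
  have : {z : ℂ | 1 < z.re} ∈ nhds (2 : ℂ) :=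
    (isOpen_lt continuous_const Complex.continuous_re).mem_nhds (by simp)
  filter_upwards [this] with z hz using h z hz

lemma aux_series_conj (s : ℂ) :
    (starRingEnd ℂ) (lerchSeries (1 / 2) (1 / 2) ((starRingEnd ℂ) s)) =
      lerchSeries (1 / 2) (1 / 2) s := by
  rw [lerchSeries, lerchSeries, Complex.conj_tsum]
  refine tsum_congr fun m => ?_
  have e : (m : ℂ) + ((1 / 2 : ℝ) : ℂ) = (((m : ℝ) + 1 / 2 : ℝ) : ℂ) := by
    push_cast
    ring
  rw [aux_exp, e, Complex.cpow_conj, Complex.conj_ofReal]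
  · simp
  · rw [Complex.arg_ofReal_of_nonneg (by positivity)]
    exact Real.pi_pos.ne

/-- the non-real zeros of `L(1/2, 1/2, ·)` are symmetric with respect to
the critical line. -/
theorem lerch_half_half_zeros_symmetric (F : ℂ → ℂ) (hF : IsLerch (1 / 2) (1 / 2) F) :
    ∀ ρ : ℂ, ρ.im ≠ 0 → (F ρ = 0 ↔ F (1 - (starRingEnd ℂ) ρ) = 0) := by
  intro ρ hρ
  obtain ⟨hd, hser⟩ := hF
  have hne : ρ ≠ 1 := by
    rintro rfl
    simp at hρ
  have hne' : 1 - ρ ≠ 1 := by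
    intro h
    apply hρ
    have := congrArg Complex.im h
    simpa using this
  have hconj : (starRingEnd ℂ) (F (1 - (starRingEnd ℂ) ρ)) = F (1 - ρ) := by
    have key := aux_unique (F := fun s => (starRingEnd ℂ) (F ((starRingEnd ℂ) s))) (G := F)
      (fun s hs => by
        have h1 : (starRingEnd ℂ) s ≠ 1 := by
          intro h
          apply hs
          have := congrArg (starRingEnd ℂ) h
          simpa using this
        have := (hd _ h1).conj_conj
        rw [Complex.conj_conj] at this
        exact this) hd
      (fun s hs => by
        rw [hser _ (by simpa using hs), hser _ hs, aux_series_conj]) (1 - ρ) hne'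
    simpa using key
  have h2d : Differentiable ℂ (fun s : ℂ => (2 : ℂ) ^ s) := fun s =>
    differentiableAt_id.const_cpow (Or.inl two_ne_zero)
  have hsin := aux_unique hd
    (G := fun s => 2 ^ s * HurwitzZeta.sinZeta ((1 / 4 : ℝ) : UnitAddCircle) s)
    (fun s _ => (h2d s).mul (HurwitzZeta.differentiableAt_sinZeta _ s))
    (fun s hs => by rw [hser _ hs, aux_series_sin hs]) ρ hne
  have hodd := aux_unique hd
    (G := fun s => 2 * (2 ^ s)⁻¹ * HurwitzZeta.hurwitzZetaOdd ((1 / 4 : ℝ) : UnitAddCircle) s)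
    (fun s _ => (((h2d s).inv (aux_two_ne s)).const_mul 2).mul
      (HurwitzZeta.differentiable_hurwitzZetaOdd _ s))
    (fun s hs => by rw [hser _ hs, aux_series_odd hs]) (1 - ρ) hne'
  have hnat : ∀ n : ℕ, ρ ≠ -n := by
    rintro n rfl
    simp at hρ
  have hS : Complex.sin (Real.pi * ρ / 2) ≠ 0 := by
    rw [Ne, Complex.sin_eq_zero_iff]
    rintro ⟨k, hk⟩
    apply hρ
    have hpi : (Real.pi : ℂ) ≠ 0 := by exact_mod_cast Real.pi_ne_zero
    have h3 : ρ = ((2 * k : ℝ) : ℂ) := by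
      apply mul_left_cancel₀ hpi
      push_cast
      linear_combination 2 * hk
    rw [h3, Complex.ofReal_im]
  have hP : (2 * (Real.pi : ℂ)) ^ (-ρ) ≠ 0 := by
    simp [Complex.cpow_eq_zero_iff, Real.pi_ne_zero]
  have hG := Complex.Gamma_ne_zero hnat
  have h2 := aux_two_ne
  rw [← map_eq_zero (starRingEnd ℂ) (a := F (1 - (starRingEnd ℂ) ρ)), hconj, hsin, hodd,
    HurwitzZeta.hurwitzZetaOdd_one_sub _ hnat]
  simp [hS, hP, hG, h2]
end
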